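/- X_p embedding of L²: for every p > 2 there is a constant C(p) such that for all φ ∈ C_c^∞(ℝ²), ‖φ‖_{X_p} ≤ C(p) ‖φ‖_{L²(ℝ²)}. -/

import Mathlib

/-!
Since `|R|^(-1/20) = |R|^(1/2 - 11/20)`, each summand is bounded by a power of the `L²` norm of `φ`
on `R`; the point is to sum over all shapes of rectangles, of which there are infinitely many with
any given area. The weight `|R|^(-p/20)` and the restriction to `R = I × J` factor over the two
coordinates, so the estimate reduces to the analogous one for intervals on the line.

On the line (`exists_tsum_dyadInt_le`), normalise `∫ g² = 1` and split `g` on an interval `I` at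
height `|I|^(-1/2)`. With `q = 20/11 < 2`, the high part is controlled by
`(∑_I |I|^(q/2-1) ∫_I g_high^q)^(p/q)`, and the low part by `∑_I |I|^(p/2-1) ∫_I g_low^p` through
Jensen's inequality. For fixed `x` the sums over scales are one half of a geometric series that is
largest at the scale `|I| ~ g(x)^(-2)`, so both are `≲ ∫ g²`
(`exists_tsum_high_le`, `exists_tsum_low_le`); the hypothesis `p > 2` is what makes the second
series converge.

In the plane (`exists_tsum_dyadRect_le`), the one-dimensional bound in `y` is applied to the slice
norms `F_I(y) = ‖φ(·, y) 1_I‖_{L^q}`; Minkowski's inequality (`tsum_lintegral_rpow_le`, with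
`r = p/2`) moves the `ℓ^p` sum over `I` inside the `L²` norm in `y`; and the one-dimensional bound
is applied again in `x` for each fixed `y`.
-/

open MeasureTheory Real Complex Filter
open scoped ENNReal

/-- The Fourier transform on `ℝ²`. -/
noncomputable def ft (f : ℝ × ℝ → ℂ) : ℝ × ℝ → ℂ := fun ξ =>
  ∫ x : ℝ × ℝ, Complex.exp (-2 * Real.pi * (x.1 * ξ.1 + x.2 * ξ.2) * Complex.I) * f x

/-- The inverse Fourier transform on `ℝ²`. -/
noncomputable def ftInv (f : ℝ × ℝ → ℂ) : ℝ × ℝ → ℂ := fun x =>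
  ∫ ξ : ℝ × ℝ, Complex.exp (2 * Real.pi * (x.1 * ξ.1 + x.2 * ξ.2) * Complex.I) * f ξ

/-- The dyadic rectangle `R_{k,n,p,m} = {(x,y) : n−1 ≤ 2^{−k}x ≤ n+1, m−1 ≤ 2^{−p}y ≤ m+1}`. -/
def dyadRect (k n p m : ℤ) : Set (ℝ × ℝ) :=
  {q : ℝ × ℝ | ((n : ℝ) - 1 ≤ (2:ℝ)^(-k) * q.1 ∧ (2:ℝ)^(-k) * q.1 ≤ (n : ℝ) + 1) ∧
    ((m : ℝ) - 1 ≤ (2:ℝ)^(-p) * q.2 ∧ (2:ℝ)^(-p) * q.2 ≤ (m : ℝ) + 1)}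

/-- The area of the dyadic rectangle `R_{k,n,p,m}`, namely `2^{k+1}·2^{p+1}`. -/
noncomputable def dyadRectArea (k p : ℤ) : ℝ := (2:ℝ)^(k+1) * (2:ℝ)^(p+1)

/-- The norm `‖φ‖_{X_p} = (Σ_{R∈𝓡} |R|^{−p/20} ‖φ·1_R‖_{L^{20/11}}^p)^{1/p}`, the sum
being over all dyadic rectangles. -/
noncomputable def XpNorm (p : ℝ) (φ : ℝ × ℝ → ℂ) : ℝ≥0∞ :=
  (∑' r : ℤ × ℤ × ℤ × ℤ,
    ENNReal.ofReal ((dyadRectArea r.1 r.2.2.1) ^ (-(p/20))) *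
      eLpNorm ((dyadRect r.1 r.2.1 r.2.2.1 r.2.2.2).indicator φ) (ENNReal.ofReal (20/11))
        (volume : Measure (ℝ × ℝ)) ^ p) ^ (1/p)

/-! ### Dyadic intervals -/

/-- The length `2^(k+1)` of a dyadic interval at scale `k`. A real exponent is used so that all
the algebra of powers can be done by `ENNReal.rpow_add` and `ENNReal.rpow_mul`. -/
noncomputable def dyadLen (k : ℤ) : ℝ≥0∞ := (2 : ℝ≥0∞) ^ ((k : ℝ) + 1)

/-- The one-dimensional dyadic interval whose products form the sets `dyadRect`. -/
def dyadInt (k n : ℤ) : Set ℝ :=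
  {x : ℝ | (n : ℝ) - 1 ≤ (2:ℝ)^(-k) * x ∧ (2:ℝ)^(-k) * x ≤ (n : ℝ) + 1}

lemma dyadInt_eq_Icc (k n : ℤ) :
    dyadInt k n = Set.Icc ((2:ℝ)^k * ((n:ℝ) - 1)) ((2:ℝ)^k * ((n:ℝ) + 1)) := by
  ext x
  have h : (0:ℝ) < (2:ℝ)^k := by positivity
  simp only [dyadInt, Set.mem_ofPred_eq, Set.mem_Icc, zpow_neg]
  rw [inv_mul_eq_div, le_div_iff₀ h, div_le_iff₀ h, mul_comm ((n:ℝ) - 1), mul_comm ((n:ℝ) + 1)]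

lemma measurableSet_dyadInt (k n : ℤ) : MeasurableSet (dyadInt k n) := by
  rw [dyadInt_eq_Icc]; exact measurableSet_Icc

lemma ofReal_two_zpow (k : ℤ) : ENNReal.ofReal ((2:ℝ)^(k+1)) = dyadLen k := by
  rw [dyadLen, ← Real.rpow_intCast, ← ENNReal.ofReal_rpow_of_pos two_pos]
  simp

lemma volume_dyadInt (k n : ℤ) : volume (dyadInt k n) = dyadLen k := by
  rw [dyadInt_eq_Icc, Real.volume_Icc, ← ofReal_two_zpow, zpow_add₀ two_ne_zero]
  congr 1; ring

lemma dyadLen_rpow (k : ℤ) (a : ℝ) : dyadLen k ^ a = (2 : ℝ≥0∞) ^ (((k : ℝ) + 1) * a) := by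
  rw [dyadLen, ENNReal.rpow_mul]

/-- Each point lies in at most three dyadic intervals of a given scale. -/
lemma tsum_indicator_dyadInt_le (k : ℤ) (F : ℝ → ℝ≥0∞) (x : ℝ) :
    ∑' n : ℤ, (dyadInt k n).indicator F x ≤ 3 * F x := by
  set t := (2:ℝ)^(-k) * x with ht
  rw [tsum_eq_sum (s := Finset.Icc (⌈t⌉ - 1) (⌈t⌉ + 1))]
  · refine (Finset.sum_le_card_nsmul _ _ (F x)
      fun n _ => Set.indicator_le_self _ _ _).trans ?_
    rw [nsmul_eq_mul, Int.card_Icc]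
    have : (⌈t⌉ + 1 + 1 - (⌈t⌉ - 1)).toNat = 3 := by
      rw [show ⌈t⌉ + 1 + 1 - (⌈t⌉ - 1) = 3 by ring]; rfl
    rw [this]; norm_num
  · intro n hn
    refine Set.indicator_of_notMem ?_ _
    rintro ⟨h1, h2⟩
    rw [← ht] at h1 h2
    apply hn
    have h3 := Int.le_ceil t
    have h4 := Int.ceil_lt_add_one t
    rw [Finset.mem_Icc]
    constructor
    · have : (⌈t⌉ : ℝ) < ((n + 2 : ℤ) : ℝ) := by push_cast; linarith
      have := Int.cast_lt.1 this
      omega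
    · have : (n : ℝ) ≤ ((⌈t⌉ + 1 : ℤ) : ℝ) := by push_cast; linarith
      exact Int.cast_le.1 this

lemma tsum_setLIntegral_dyadInt_le (k : ℤ) {F : ℝ → ℝ≥0∞} (hF : Measurable F) :
    ∑' n : ℤ, ∫⁻ x in dyadInt k n, F x ≤ 3 * ∫⁻ x, F x := by
  simp_rw [← lintegral_indicator (measurableSet_dyadInt k _)]
  rw [← lintegral_tsum fun n => (hF.indicator (measurableSet_dyadInt k n)).aemeasurable,
    ← lintegral_const_mul _ hF]
  exact lintegral_mono fun x => tsum_indicator_dyadInt_le k F x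

/-- The inclusion of `ℓ^1` in `ℓ^s`. -/
lemma tsum_rpow_le_rpow_tsum {ι : Type*} (a : ι → ℝ≥0∞) {s : ℝ} (hs : 1 ≤ s) :
    ∑' i, a i ^ s ≤ (∑' i, a i) ^ s := by
  have key : ∀ x : ℝ≥0∞, x ^ s = x * x ^ (s - 1) := fun x => by
    conv_lhs => rw [show s = 1 + (s - 1) by ring]
    rw [ENNReal.rpow_add_of_nonneg _ _ zero_le_one (by linarith), ENNReal.rpow_one]
  calc ∑' i, a i ^ s ≤ ∑' i, a i * (∑' j, a j) ^ (s - 1) := by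
        refine ENNReal.tsum_le_tsum fun i => ?_
        rw [key]
        exact mul_le_mul_right (ENNReal.rpow_le_rpow (ENNReal.le_tsum i) (by linarith)) _
    _ = _ := by rw [ENNReal.tsum_mul_right, ← key]

/-- Jensen's inequality on a dyadic interval. -/
lemma setLIntegral_rpow_le {F : ℝ → ℝ≥0∞} (hF : Measurable F) (k n : ℤ) {s : ℝ} (hs : 1 < s) :
    (∫⁻ x in dyadInt k n, F x) ^ s ≤
      dyadLen k ^ (s - 1) * ∫⁻ x in dyadInt k n, F x ^ s := by
  have hc : s.HolderConjugate (s / (s - 1)) := Real.HolderConjugate.conjExponent hs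
  have h := ENNReal.lintegral_mul_le_Lp_mul_Lq (volume.restrict (dyadInt k n)) hc
    (f := F) (g := fun _ => 1) hF.aemeasurable aemeasurable_const
  simp only [Pi.mul_apply, mul_one, ENNReal.one_rpow, lintegral_const, Measure.restrict_apply
    MeasurableSet.univ, Set.univ_inter, one_mul, volume_dyadInt] at h
  have h' := ENNReal.rpow_le_rpow h (by linarith : 0 ≤ s)
  have h1 : s - 1 ≠ 0 := by linarith
  have h0 : s ≠ 0 := by linarith
  rw [ENNReal.mul_rpow_of_nonneg _ _ (by linarith), ← ENNReal.rpow_mul, ← ENNReal.rpow_mul,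
    one_div_mul_cancel h0, ENNReal.rpow_one, mul_comm] at h'
  convert h' using 3
  field_simp

/-! ### Sums over scales at a fixed height -/

/-- The sum of a two-sided geometric series centred at an arbitrary real number is bounded
independently of the centre. -/
lemma exists_tsum_two_rpow_le {θ : ℝ} (hθ : 0 < θ) :
    ∃ K : ℝ≥0∞, K ≠ ⊤ ∧ ∀ τ : ℝ, ∑' k : ℤ, (2 : ℝ≥0∞) ^ (-θ * |(k : ℝ) - τ|) ≤ K := by
  refine ⟨2 ^ θ * ∑' m : ℤ, (2 : ℝ≥0∞) ^ (-θ * |(m : ℝ)|), ENNReal.mul_ne_top (by simp) ?_, ?_⟩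
  · have hr : (2 : ℝ≥0∞) ^ (-θ) < 1 := by
      rw [ENNReal.rpow_neg]
      exact ENNReal.inv_lt_one.2 (ENNReal.one_lt_rpow (by norm_num) hθ)
    have hfin : (1 - (2 : ℝ≥0∞) ^ (-θ))⁻¹ ≠ ⊤ :=
      ENNReal.inv_ne_top.2 (tsub_pos_of_lt hr).ne'
    rw [tsum_of_nat_of_neg_add_one ENNReal.summable ENNReal.summable]
    have e1 : ∀ n : ℕ, (2 : ℝ≥0∞) ^ (-θ * |((n : ℤ) : ℝ)|) = ((2 : ℝ≥0∞) ^ (-θ)) ^ n := fun n => by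
      rw [ENNReal.rpow_mul, ← ENNReal.rpow_natCast]; simp
    have e2 : ∀ n : ℕ, (2 : ℝ≥0∞) ^ (-θ * |((-((n : ℤ) + 1) : ℤ) : ℝ)|) ≤
        ((2 : ℝ≥0∞) ^ (-θ)) ^ n := fun n => by
      rw [ENNReal.rpow_mul, ← ENNReal.rpow_natCast, ← ENNReal.rpow_mul, ← ENNReal.rpow_mul]
      refine ENNReal.rpow_le_rpow_of_exponent_le (by norm_num) ?_
      push_cast
      rw [abs_neg, abs_of_nonneg (by positivity)]
      nlinarith
    refine ENNReal.add_ne_top.2 ⟨?_, ?_⟩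
    · simp_rw [e1]; rwa [ENNReal.tsum_geometric]
    · refine ne_top_of_le_ne_top hfin ?_
      rw [← ENNReal.tsum_geometric]
      exact ENNReal.tsum_le_tsum e2
  · intro τ
    rw [← (Equiv.subRight ⌈τ⌉).tsum_eq (fun m : ℤ => (2 : ℝ≥0∞) ^ (-θ * |(m : ℝ)|)),
      ← ENNReal.tsum_mul_left]
    refine ENNReal.tsum_le_tsum fun k => ?_
    rw [← ENNReal.rpow_add _ _ (by norm_num) (by norm_num)]
    refine ENNReal.rpow_le_rpow_of_exponent_le (by norm_num) ?_
    simp only [Equiv.subRight_apply]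
    push_cast
    have h3 := Int.le_ceil τ
    have h4 := Int.ceil_lt_add_one τ
    have : |(k:ℝ) - ⌈τ⌉| ≤ |(k:ℝ) - τ| + 1 := by
      rw [show (k:ℝ) - ⌈τ⌉ = ((k:ℝ) - τ) + (τ - ⌈τ⌉) by ring]
      refine (abs_add_le _ _).trans ?_
      gcongr
      rw [abs_le]; constructor <;> linarith
    nlinarith

/-- A positive finite extended real is a real power of two. -/
lemma exists_eq_two_rpow {t : ℝ≥0∞} (h0 : t ≠ 0) (h1 : t ≠ ⊤) :
    ∃ τ : ℝ, t = (2 : ℝ≥0∞) ^ τ := by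
  refine ⟨Real.logb 2 t.toReal, ?_⟩
  have h : (0:ℝ) < t.toReal := ENNReal.toReal_pos h0 h1
  rw [show (2:ℝ≥0∞) = ENNReal.ofReal 2 by simp, ENNReal.ofReal_rpow_of_pos two_pos,
    Real.rpow_logb two_pos (by norm_num) h, ENNReal.ofReal_toReal h1]

lemma two_rpow_lt_iff {a b : ℝ} : (2 : ℝ≥0∞) ^ a < (2 : ℝ≥0∞) ^ b ↔ a < b :=
  StrictMono.lt_iff_lt (f := fun x : ℝ => (2 : ℝ≥0∞) ^ x)
    fun _ _ h => ENNReal.rpow_lt_rpow_of_exponent_lt (by norm_num) (by norm_num) h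

/-- Summed over all scales `k`, the part of `t ^ (20/11)` above the height `dyadLen k ^ (-1/2)`
costs `t ^ 2`. -/
lemma exists_tsum_high_le :
    ∃ K : ℝ≥0∞, K ≠ ⊤ ∧ ∀ t : ℝ≥0∞, ∑' k : ℤ, dyadLen k ^ (-(1/11) : ℝ) *
      (if dyadLen k ^ (-(1/2) : ℝ) < t then t ^ (20/11 : ℝ) else 0) ≤ K * t ^ (2:ℝ) := by
  obtain ⟨K, hK, h⟩ := exists_tsum_two_rpow_le (θ := 1/11) (by norm_num)
  -- `K + 1` rather than `K`: the constant must be nonzero for the bound to hold at `t = ⊤`.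
  refine ⟨K + 1, by simpa using hK, fun t => ?_⟩
  rcases eq_or_ne t 0 with rfl | h0
  · simp
  rcases eq_or_ne t ⊤ with rfl | h1
  · simp
  obtain ⟨τ, rfl⟩ := exists_eq_two_rpow h0 h1
  refine le_trans ?_ (mul_le_mul_left ((h (-1 - 2 * τ)).trans le_self_add) _)
  rw [← ENNReal.tsum_mul_right]
  refine ENNReal.tsum_le_tsum fun k => ?_
  split_ifs with hc
  · rw [dyadLen_rpow, two_rpow_lt_iff] at hc
    rw [dyadLen_rpow, ← ENNReal.rpow_mul, ← ENNReal.rpow_mul,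
      ← ENNReal.rpow_add _ _ (by norm_num) (by norm_num),
      ← ENNReal.rpow_add _ _ (by norm_num) (by norm_num), abs_of_nonneg (by linarith)]
    refine ENNReal.rpow_le_rpow_of_exponent_le (by norm_num) ?_
    linarith
  · simp

/-- Summed over all scales `k`, the part of `t ^ p` below the height `dyadLen k ^ (-1/2)`
costs `t ^ 2`. -/
lemma exists_tsum_low_le {p : ℝ} (hp : 2 < p) :
    ∃ K : ℝ≥0∞, K ≠ ⊤ ∧ ∀ t : ℝ≥0∞, ∑' k : ℤ, dyadLen k ^ (p/2 - 1) *
      (if dyadLen k ^ (-(1/2) : ℝ) < t then 0 else t ^ p) ≤ K * t ^ (2:ℝ) := by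
  obtain ⟨K, hK, h⟩ := exists_tsum_two_rpow_le (θ := p/2 - 1) (by linarith)
  refine ⟨K + 1, by simpa using hK, fun t => ?_⟩
  rcases eq_or_ne t 0 with rfl | h0
  · simp [show 0 < p by linarith]
  rcases eq_or_ne t ⊤ with rfl | h1
  · simp
  obtain ⟨τ, rfl⟩ := exists_eq_two_rpow h0 h1
  refine le_trans ?_ (mul_le_mul_left ((h (-1 - 2 * τ)).trans le_self_add) _)
  rw [← ENNReal.tsum_mul_right]
  refine ENNReal.tsum_le_tsum fun k => ?_
  split_ifs with hc
  · simp
  · rw [dyadLen_rpow, two_rpow_lt_iff] at hc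
    rw [dyadLen_rpow, ← ENNReal.rpow_mul, ← ENNReal.rpow_mul,
      ← ENNReal.rpow_add _ _ (by norm_num) (by norm_num),
      ← ENNReal.rpow_add _ _ (by norm_num) (by norm_num), abs_of_nonpos (by linarith)]
    refine ENNReal.rpow_le_rpow_of_exponent_le (by norm_num) ?_
    linarith

/-! ### Minkowski's integral inequality -/

/-- Minkowski's inequality for the norm of `ℓ^r` and an integral. -/
lemma tsum_lintegral_rpow_le {α ι : Type*} [MeasurableSpace α] {μ : Measure α}
    {G : ι → α → ℝ≥0∞} (hG : ∀ i, Measurable (G i)) {r : ℝ} (hr : 1 < r) :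
    ∑' i, (∫⁻ y, G i y ∂μ) ^ r ≤ (∫⁻ y, (∑' i, G i y ^ r) ^ (1 / r) ∂μ) ^ r := by
  have r0 : 0 < r := by linarith
  have hle : ∀ i, ∫⁻ y, G i y ∂μ ≤ ∫⁻ y, (∑' i, G i y ^ r) ^ (1 / r) ∂μ := fun i =>
    lintegral_mono fun y => by
      rw [one_div, ENNReal.le_rpow_inv_iff r0]
      exact ENNReal.le_tsum (f := fun i => G i y ^ r) i
  set M := ∫⁻ y, (∑' i, G i y ^ r) ^ (1 / r) ∂μ with hM
  rcases eq_or_ne M ⊤ with hMt | hMt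
  · rw [hMt, ENNReal.top_rpow_of_pos r0]; exact le_top
  rw [ENNReal.tsum_eq_iSup_sum]
  refine iSup_le fun s => ?_
  set A : ι → ℝ≥0∞ := fun i => ∫⁻ y, G i y ∂μ with hA
  have hAt : ∀ i, A i ≠ ⊤ := fun i => ne_top_of_le_ne_top hMt (hle i)
  set S := ∑ i ∈ s, A i ^ r with hS
  have hSt : S ≠ ⊤ := ENNReal.sum_ne_top.2 fun i _ => ENNReal.rpow_ne_top_of_nonneg r0.le (hAt i)
  change S ≤ M ^ r
  rcases eq_or_ne S 0 with hS0 | hS0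
  · rw [hS0]; exact zero_le
  have hc : r.HolderConjugate (r / (r - 1)) := Real.HolderConjugate.conjExponent hr
  have h1 : r - 1 ≠ 0 := by linarith
  -- Test the vector `A` against its dual vector `A ^ (r - 1)` and apply Hölder under the integral.
  have key : S ≤ M * S ^ (1 / (r / (r - 1))) := by
    calc S = ∑ i ∈ s, A i ^ (r - 1) * A i := by
          refine Finset.sum_congr rfl fun i _ => ?_
          conv_lhs => rw [show r = (r - 1) + 1 by ring]
          rw [ENNReal.rpow_add_of_nonneg _ _ (by linarith) zero_le_one, ENNReal.rpow_one]
      _ = ∫⁻ y, ∑ i ∈ s, A i ^ (r - 1) * G i y ∂μ := by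
          rw [lintegral_finsetSum _ fun i _ => (hG i).const_mul _]
          exact Finset.sum_congr rfl fun i _ => (lintegral_const_mul _ (hG i)).symm
      _ ≤ ∫⁻ y, (∑' i, G i y ^ r) ^ (1 / r) * S ^ (1 / (r / (r - 1))) ∂μ := by
          refine lintegral_mono fun y => ?_
          have := ENNReal.inner_le_Lp_mul_Lq s (fun i => G i y) (fun i => A i ^ (r - 1)) hc
          simp_rw [mul_comm (A _ ^ (r - 1))]
          refine this.trans ?_
          gcongr
          · exact ENNReal.sum_le_tsum s
          · refine le_of_eq (Finset.sum_congr rfl fun i _ => ?_)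
            rw [← ENNReal.rpow_mul]
            congr 1; field_simp
      _ = M * S ^ (1 / (r / (r - 1))) := by
          rw [lintegral_mul_const' _ _ (ENNReal.rpow_ne_top_of_nonneg (by positivity) hSt)]
  have key2 : S ^ (1 / r) ≤ M := by
    have e : S = S ^ (1 / r) * S ^ (1 / (r / (r - 1))) := by
      rw [← ENNReal.rpow_add _ _ hS0 hSt]
      conv_lhs => rw [← ENNReal.rpow_one S]
      congr 1; field_simp; ring
    nth_rewrite 1 [e] at key
    refine (ENNReal.mul_le_mul_iff_left ?_ ?_).1 key
    · exact (ENNReal.rpow_pos (pos_iff_ne_zero.2 hS0) hSt).ne'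
    · exact ENNReal.rpow_ne_top_of_nonneg (by positivity) hSt
  have := ENNReal.rpow_le_rpow key2 r0.le
  rwa [← ENNReal.rpow_mul, one_div_mul_cancel r0.ne', ENNReal.rpow_one] at this

/-! ### The embedding on the line -/

/-- The one-dimensional embedding, for functions with `∫ g ^ 2 ≤ 1`. On an interval of length `ℓ`
the function is split at height `ℓ ^ (-1/2)`: the high part is summed in `ℓ^1`, the low part is
put in `L^p` by Jensen's inequality. -/
lemma exists_tsum_dyadInt_le_of_le_one {p : ℝ} (hp : 2 < p) :
    ∃ K : ℝ≥0∞, K ≠ ⊤ ∧ ∀ g : ℝ → ℝ≥0∞, Measurable g → ∫⁻ x, g x ^ (2:ℝ) ≤ 1 →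
      ∑' k : ℤ, ∑' n : ℤ, dyadLen k ^ (-(p/20)) *
        (∫⁻ x in dyadInt k n, g x ^ (20/11 : ℝ)) ^ (11*p/20) ≤ K := by
  obtain ⟨K₁, hK₁, H₁⟩ := exists_tsum_high_le
  obtain ⟨K₂, hK₂, H₂⟩ := exists_tsum_low_le hp
  set s : ℝ := 11*p/20 with hs
  have s1 : 1 < s := by rw [hs]; linarith
  refine ⟨2 ^ (s - 1) * ((3 * K₁) ^ s + 3 * K₂), ?_, fun g hg hN => ?_⟩
  · have : (3 * K₁) ^ s ≠ ⊤ :=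
      ENNReal.rpow_ne_top_of_nonneg (by linarith) (ENNReal.mul_ne_top (by simp) hK₁)
    have : 3 * K₂ ≠ ⊤ := ENNReal.mul_ne_top (by simp) hK₂
    exact ENNReal.mul_ne_top (ENNReal.rpow_ne_top_of_nonneg (by linarith) (by simp)) 
      (ENNReal.add_ne_top.2 ⟨‹_›, ‹_›⟩)
  set hi : ℤ → ℝ → ℝ≥0∞ := fun k x =>
    if dyadLen k ^ (-(1/2) : ℝ) < g x then g x ^ (20/11 : ℝ) else 0 with hhi
  set lo : ℤ → ℝ → ℝ≥0∞ := fun k x =>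
    if dyadLen k ^ (-(1/2) : ℝ) < g x then 0 else g x ^ (20/11 : ℝ) with hlo
  have mhi : ∀ k, Measurable (hi k) := fun k =>
    Measurable.ite (measurableSet_lt measurable_const hg) (hg.pow_const _) measurable_const
  have mlo : ∀ k, Measurable (lo k) := fun k =>
    Measurable.ite (measurableSet_lt measurable_const hg) measurable_const (hg.pow_const _)
  have hsplit : ∀ k x, g x ^ (20/11 : ℝ) = hi k x + lo k x := fun k x => by
    simp only [hhi, hlo]; split_ifs <;> simp
  have hterm : ∀ k n : ℤ, dyadLen k ^ (-(p/20)) *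
      (∫⁻ x in dyadInt k n, g x ^ (20/11 : ℝ)) ^ s ≤ 2 ^ (s - 1) *
        ((dyadLen k ^ (-(1/11) : ℝ) * ∫⁻ x in dyadInt k n, hi k x) ^ s +
          dyadLen k ^ (p/2 - 1) * ∫⁻ x in dyadInt k n, lo k x ^ s) := by
    intro k n
    have d0 : dyadLen k ≠ 0 := by simp [dyadLen]
    have dt : dyadLen k ≠ ⊤ := by simp [dyadLen]
    simp_rw [hsplit k]
    rw [lintegral_add_left (mhi k)]
    calc _ ≤ dyadLen k ^ (-(p/20)) * (2 ^ (s - 1) * ((∫⁻ x in dyadInt k n, hi k x) ^ s +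
            dyadLen k ^ (s - 1) * ∫⁻ x in dyadInt k n, lo k x ^ s)) := by
          gcongr
          refine (ENNReal.rpow_add_le_mul_rpow_add_rpow _ _ s1.le).trans ?_
          gcongr
          exact setLIntegral_rpow_le (mlo k) k n s1
      _ = _ := by
          rw [ENNReal.mul_rpow_of_nonneg _ _ (by linarith), ← ENNReal.rpow_mul,
            show p / 2 - 1 = -(p/20) + (s - 1) by rw [hs]; ring, ENNReal.rpow_add _ _ d0 dt,
            show -(1/11) * s = -(p/20) by rw [hs]; ring]
          ring
  have hhigh : ∑' k : ℤ, ∑' n : ℤ,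
      (dyadLen k ^ (-(1/11) : ℝ) * ∫⁻ x in dyadInt k n, hi k x) ^ s ≤ (3 * K₁) ^ s := by
    rw [← ENNReal.tsum_prod (f := fun k n =>
      (dyadLen k ^ (-(1/11) : ℝ) * ∫⁻ x in dyadInt k n, hi k x) ^ s)]
    refine (tsum_rpow_le_rpow_tsum _ s1.le).trans ?_
    gcongr
    rw [ENNReal.tsum_prod (f := fun k n =>
      (dyadLen k ^ (-(1/11) : ℝ) * ∫⁻ x in dyadInt k n, hi k x))]
    calc _ ≤ ∑' k : ℤ, ∫⁻ x, 3 * (dyadLen k ^ (-(1/11) : ℝ) * hi k x) := by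
          refine ENNReal.tsum_le_tsum fun k => ?_
          rw [ENNReal.tsum_mul_left, lintegral_const_mul _ ((mhi k).const_mul _),
            lintegral_const_mul _ (mhi k), mul_left_comm]
          gcongr
          exact tsum_setLIntegral_dyadInt_le k (mhi k)
      _ = ∫⁻ x, 3 * ∑' k : ℤ, dyadLen k ^ (-(1/11) : ℝ) * hi k x := by
          rw [← lintegral_tsum fun k => (((mhi k).const_mul _).const_mul _).aemeasurable]
          simp_rw [ENNReal.tsum_mul_left]
      _ ≤ ∫⁻ x, 3 * (K₁ * g x ^ (2:ℝ)) := by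
          gcongr with x
          exact H₁ (g x)
      _ ≤ 3 * K₁ := by
          simp_rw [← mul_assoc]
          rw [lintegral_const_mul _ (hg.pow_const _)]
          exact mul_le_of_le_one_right' hN
  have hlow : ∑' k : ℤ, ∑' n : ℤ,
      dyadLen k ^ (p/2 - 1) * ∫⁻ x in dyadInt k n, lo k x ^ s ≤ 3 * K₂ := by
    calc _ ≤ ∑' k : ℤ, ∫⁻ x, 3 * (dyadLen k ^ (p/2 - 1) * lo k x ^ s) := by
          refine ENNReal.tsum_le_tsum fun k => ?_
          rw [ENNReal.tsum_mul_left,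
            lintegral_const_mul _ (((mlo k).pow_const _).const_mul _),
            lintegral_const_mul _ ((mlo k).pow_const _), mul_left_comm]
          gcongr
          exact tsum_setLIntegral_dyadInt_le k ((mlo k).pow_const _)
      _ = ∫⁻ x, 3 * ∑' k : ℤ, dyadLen k ^ (p/2 - 1) * lo k x ^ s := by
          rw [← lintegral_tsum fun k =>
            ((((mlo k).pow_const _).const_mul _).const_mul _).aemeasurable]
          simp_rw [ENNReal.tsum_mul_left]
      _ ≤ ∫⁻ x, 3 * (K₂ * g x ^ (2:ℝ)) := by
          gcongr with x
          refine le_trans (le_of_eq ?_) (H₂ (g x))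
          refine tsum_congr fun k => ?_
          simp only [hlo]
          split_ifs
          · rw [ENNReal.zero_rpow_of_pos (by linarith)]
          · rw [← ENNReal.rpow_mul, show 20/11 * s = p by rw [hs]; ring]
      _ ≤ 3 * K₂ := by
          simp_rw [← mul_assoc]
          rw [lintegral_const_mul _ (hg.pow_const _)]
          exact mul_le_of_le_one_right' hN
  calc _ ≤ _ := ENNReal.tsum_le_tsum fun k => ENNReal.tsum_le_tsum fun n => hterm k n
    _ ≤ _ := by
        simp_rw [ENNReal.tsum_mul_left, ENNReal.tsum_add]
        gcongr

/-- The one-dimensional embedding; both sides are homogeneous of degree `p` in `g`. -/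
lemma exists_tsum_dyadInt_le {p : ℝ} (hp : 2 < p) :
    ∃ K : ℝ≥0∞, K ≠ ⊤ ∧ ∀ g : ℝ → ℝ≥0∞, Measurable g →
      ∑' k : ℤ, ∑' n : ℤ, dyadLen k ^ (-(p/20)) *
        (∫⁻ x in dyadInt k n, g x ^ (20/11 : ℝ)) ^ (11*p/20) ≤
          K * (∫⁻ x, g x ^ (2:ℝ)) ^ (p/2) := by
  obtain ⟨K, hK, H⟩ := exists_tsum_dyadInt_le_of_le_one hp
  refine ⟨K + 1, by simpa using hK, fun g hg => ?_⟩
  set N := ∫⁻ x, g x ^ (2:ℝ) with hN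
  rcases eq_or_ne N 0 with h0 | h0
  · have hg0 : g =ᵐ[volume] 0 := by
      rw [hN, lintegral_eq_zero_iff (hg.pow_const _)] at h0
      filter_upwards [h0] with x hx
      simpa using hx
    refine le_of_eq_of_le ?_ zero_le
    simp only [ENNReal.tsum_eq_zero]
    intro k n
    have : ∫⁻ x in dyadInt k n, g x ^ (20/11 : ℝ) = 0 := by
      rw [lintegral_eq_zero_iff (hg.pow_const _)]
      filter_upwards [ae_restrict_of_ae hg0] with x hx
      simp [hx]
    rw [this, ENNReal.zero_rpow_of_pos (by linarith), mul_zero]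
  rcases eq_or_ne N ⊤ with h1 | h1
  · rw [h1, ENNReal.top_rpow_of_pos (by linarith), ENNReal.mul_top (by simp)]
    exact le_top
  have hc := H (fun x => N ^ (-(1/2) : ℝ) * g x) (hg.const_mul _) ?_
  · have c0 : N ^ (p/2) ≠ 0 := (ENNReal.rpow_pos (pos_iff_ne_zero.2 h0) h1).ne'
    have ct : N ^ (p/2) ≠ ⊤ := ENNReal.rpow_ne_top_of_nonneg (by linarith) h1
    have : ∀ k n : ℤ, ∫⁻ x in dyadInt k n, (N ^ (-(1/2) : ℝ) * g x) ^ (20/11 : ℝ) =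
        N ^ (-(10/11) : ℝ) * ∫⁻ x in dyadInt k n, g x ^ (20/11 : ℝ) := fun k n => by
      rw [← lintegral_const_mul _ (hg.pow_const _)]
      refine lintegral_congr fun x => ?_
      rw [ENNReal.mul_rpow_of_nonneg _ _ (by norm_num), ← ENNReal.rpow_mul]
      norm_num
    simp_rw [this, ENNReal.mul_rpow_of_nonneg _ _ (show 0 ≤ 11 * p / 20 by linarith),
      ← ENNReal.rpow_mul, mul_left_comm _ (N ^ (-(10/11) * (11 * p / 20))), ENNReal.tsum_mul_left] at hc
    rw [show -(10/11) * (11 * p / 20) = -(p/2) by ring, ENNReal.rpow_neg, mul_comm,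
      ← div_eq_mul_inv, ENNReal.div_le_iff c0 ct] at hc
    simp_rw [ENNReal.tsum_mul_left]
    exact hc.trans (mul_le_mul_left le_self_add _)
  · simp_rw [ENNReal.mul_rpow_of_nonneg _ _ zero_le_two, ← ENNReal.rpow_mul]
    rw [lintegral_const_mul _ (hg.pow_const _), ← hN]
    norm_num
    rw [ENNReal.rpow_neg_one, ENNReal.inv_mul_cancel h0 h1]

/-! ### The embedding in the plane -/

/-- The two-dimensional embedding, by applying the one-dimensional one in each variable and
Minkowski's inequality in between. -/
lemma exists_tsum_dyadRect_le {p : ℝ} (hp : 2 < p) :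
    ∃ K : ℝ≥0∞, K ≠ ⊤ ∧ ∀ g : ℝ × ℝ → ℝ≥0∞, Measurable g →
      ∑' k : ℤ, ∑' n : ℤ, ∑' l : ℤ, ∑' m : ℤ,
        dyadLen k ^ (-(p/20)) * (dyadLen l ^ (-(p/20)) *
        (∫⁻ z in dyadInt k n ×ˢ dyadInt l m, g z ^ (20/11 : ℝ)) ^ (11*p/20)) ≤
          K * (∫⁻ z, g z ^ (2:ℝ)) ^ (p/2) := by
  obtain ⟨K, hK, H⟩ := exists_tsum_dyadInt_le hp
  have p0 : 0 < p := by linarith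
  refine ⟨K * K, ENNReal.mul_ne_top hK hK, fun g hg => ?_⟩
  have hq : Measurable fun z => g z ^ (20/11 : ℝ) := hg.pow_const _
  set Q : ℤ × ℤ → ℝ → ℝ≥0∞ := fun i y => ∫⁻ x in dyadInt i.1 i.2, g (x, y) ^ (20/11 : ℝ) with hQ
  have mQ : ∀ i, Measurable (Q i) := fun i => hq.lintegral_prod_left'
  -- `F` is the slice norm over the first-coordinate interval.
  set F : ℤ × ℤ → ℝ → ℝ≥0∞ := fun i y => Q i y ^ (11/20 : ℝ) with hF
  have mF : ∀ i, Measurable (F i) := fun i => (mQ i).pow_const _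
  set G : ℤ × ℤ → ℝ → ℝ≥0∞ := fun i y => dyadLen i.1 ^ (-(1/10) : ℝ) * F i y ^ (2:ℝ) with hG
  have mG : ∀ i, Measurable (G i) := fun i => ((mF i).pow_const _).const_mul _
  have hGp : ∀ i y, G i y ^ (p/2) = dyadLen i.1 ^ (-(p/20)) * Q i y ^ (11*p/20) := fun i y => by
    simp only [hG, hF]
    rw [ENNReal.mul_rpow_of_nonneg _ _ (by linarith), ← ENNReal.rpow_mul, ← ENNReal.rpow_mul,
      ← ENNReal.rpow_mul]
    congr 2 <;> ring
  have hGi : ∀ i, (∫⁻ y, G i y) ^ (p/2) =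
      dyadLen i.1 ^ (-(p/20)) * (∫⁻ y, F i y ^ (2:ℝ)) ^ (p/2) := fun i => by
    simp only [hG]
    rw [lintegral_const_mul _ ((mF i).pow_const _), ENNReal.mul_rpow_of_nonneg _ _ (by linarith),
      ← ENNReal.rpow_mul]
    congr 2; ring
  calc _ ≤ ∑' i : ℤ × ℤ, dyadLen i.1 ^ (-(p/20)) * (K * (∫⁻ y, F i y ^ (2:ℝ)) ^ (p/2)) := by
        rw [← ENNReal.tsum_prod (f := fun k n => ∑' l : ℤ, ∑' m : ℤ,
          dyadLen k ^ (-(p/20)) * (dyadLen l ^ (-(p/20)) *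
          (∫⁻ z in dyadInt k n ×ˢ dyadInt l m, g z ^ (20/11 : ℝ)) ^ (11*p/20)))]
        refine ENNReal.tsum_le_tsum fun i => ?_
        simp_rw [ENNReal.tsum_mul_left]
        gcongr
        refine le_of_eq_of_le ?_ (H (F i) (mF i))
        refine tsum_congr fun l => ?_
        rw [← ENNReal.tsum_mul_left]
        refine tsum_congr fun m => ?_
        congr 2
        rw [Measure.volume_eq_prod, setLIntegral_prod_symm _ hq.aemeasurable]
        refine lintegral_congr fun y => ?_
        simp only [hF, hQ]
        rw [← ENNReal.rpow_mul]; norm_num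
    _ = K * ∑' i : ℤ × ℤ, (∫⁻ y, G i y) ^ (p/2) := by
        rw [← ENNReal.tsum_mul_left]
        refine tsum_congr fun i => ?_
        rw [hGi]; ring
    _ ≤ K * (∫⁻ y, (∑' i, G i y ^ (p/2)) ^ (1 / (p/2))) ^ (p/2) := by
        gcongr
        exact tsum_lintegral_rpow_le mG (by linarith)
    _ ≤ K * (∫⁻ y, K ^ (1 / (p/2)) * ∫⁻ x, g (x, y) ^ (2:ℝ)) ^ (p/2) := by
        gcongr with y
        have h := H (fun x => g (x, y)) (hg.comp measurable_prodMk_right)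
        simp_rw [hGp]
        rw [ENNReal.tsum_prod (f := fun k n => dyadLen k ^ (-(p/20)) * Q (k, n) y ^ (11*p/20))]
        refine (ENNReal.rpow_le_rpow h (by positivity)).trans (le_of_eq ?_)
        rw [ENNReal.mul_rpow_of_nonneg _ _ (by positivity), ← ENNReal.rpow_mul,
          mul_one_div_cancel (by positivity), ENNReal.rpow_one]
    _ = K * K * (∫⁻ z, g z ^ (2:ℝ)) ^ (p/2) := by
        rw [Measure.volume_eq_prod, lintegral_prod_symm _ (hg.pow_const _).aemeasurable,
          lintegral_const_mul _ (hg.pow_const _).lintegral_prod_left',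
          ENNReal.mul_rpow_of_nonneg _ _ (by positivity), ← ENNReal.rpow_mul,
          one_div_mul_cancel (by positivity), ENNReal.rpow_one, mul_assoc]

lemma ofReal_dyadRectArea_rpow (k l : ℤ) (a : ℝ) :
    ENNReal.ofReal ((dyadRectArea k l) ^ a) = dyadLen k ^ a * dyadLen l ^ a := by
  rw [dyadRectArea, Real.mul_rpow (by positivity) (by positivity),
    ENNReal.ofReal_mul (by positivity), ← ENNReal.ofReal_rpow_of_pos (by positivity),
    ← ENNReal.ofReal_rpow_of_pos (by positivity), ofReal_two_zpow, ofReal_two_zpow]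

/-- **`X_p` embedding of `L²`**: for every `p > 2`, `‖φ‖_{X_p} ≲_p ‖φ‖_{L²}`. -/
theorem Xp_embedding_of_L2 (p : ℝ) (hp : 2 < p) :
    ∃ C : ℝ, 0 < C ∧ ∀ φ : ℝ × ℝ → ℂ, ContDiff ℝ (⊤ : ℕ∞) φ → HasCompactSupport φ →
      XpNorm p φ ≤ ENNReal.ofReal C * eLpNorm φ 2 (volume : Measure (ℝ × ℝ)) := by
  obtain ⟨K, hK, H⟩ := exists_tsum_dyadRect_le hp
  have p0 : 0 < p := by linarith
  have hKp : K ^ (1/p) ≠ ⊤ := ENNReal.rpow_ne_top_of_nonneg (by positivity) hK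
  refine ⟨(K ^ (1/p)).toReal + 1, by positivity, fun φ hφ _ => ?_⟩
  have hm : Measurable fun z => ‖φ z‖ₑ := hφ.continuous.enorm.measurable
  have hsum : ∑' r : ℤ × ℤ × ℤ × ℤ,
      ENNReal.ofReal ((dyadRectArea r.1 r.2.2.1) ^ (-(p/20))) *
        eLpNorm ((dyadRect r.1 r.2.1 r.2.2.1 r.2.2.2).indicator φ) (ENNReal.ofReal (20/11))
          (volume : Measure (ℝ × ℝ)) ^ p ≤ K * (∫⁻ z, ‖φ z‖ₑ ^ (2:ℝ)) ^ (p/2) := by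
    refine le_of_eq_of_le ?_ (H _ hm)
    rw [ENNReal.tsum_prod']
    refine tsum_congr fun k => ?_
    rw [ENNReal.tsum_prod']
    refine tsum_congr fun n => ?_
    rw [ENNReal.tsum_prod']
    refine tsum_congr fun l => tsum_congr fun m => ?_
    have hset : dyadRect k n l m = dyadInt k n ×ˢ dyadInt l m := rfl
    dsimp only
    rw [ofReal_dyadRectArea_rpow, mul_assoc, hset, eLpNorm_indicator_eq_eLpNorm_restrict
      ((measurableSet_dyadInt k n).prod (measurableSet_dyadInt l m)),
      eLpNorm_eq_lintegral_rpow_enorm_toReal (by simp) (by simp),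
      ENNReal.toReal_ofReal (by norm_num), ← ENNReal.rpow_mul]
    congr 3; ring
  rw [XpNorm]
  refine (ENNReal.rpow_le_rpow hsum (by positivity)).trans ?_
  rw [ENNReal.mul_rpow_of_nonneg _ _ (by positivity), ← ENNReal.rpow_mul,
    eLpNorm_eq_lintegral_rpow_enorm_toReal (by simp) (by simp), ENNReal.toReal_ofNat,
    show p / 2 * (1 / p) = 1 / 2 by field_simp]
  gcongr
  rw [ENNReal.le_ofReal_iff_toReal_le hKp (by positivity)]
  linarith
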